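/- Let D be a digraph with n vertices, m arcs and minimum outdegree d ≥ 4, let X, Y be a partition of V(D) with e(X) = 0, set θ := min{|θ(X₁,X₂)| : X₁,X₂ a partition of X}, X' := {x ∈ X : s(x) ≥ θ}, g := Σ_{x∈X∖X'} s(x), and b := (1/2)·Σ_{x∈X}(d(x) − s(x)). Let ε > 0 and suppose every y ∈ Y satisfies d(y) ≤ ε²m/4, and suppose |X'| = 2k+1 with k ≥ 1. Then either there exists a bipartition V(D) = V₁ ∪ V₂ with min{e(V₁,V₂), e(V₂,V₁)} ≥ ((d−1)/(2(2d−1)) − ε)·m, or, writing X' = {v₁,…,v_{2k+1}} with Δⱼ := s(vⱼ) and Δ₁ ≥ Δ₂ ≥ … ≥ Δ_{2k+1}, one has b < (2(2d−1)(k+1)/(3d−1))·n + ((d²−5d+2)/(3d−1))·(Σ_{j=1}^{k−1} Δⱼ + Δ_{2k} + Δ_{2k+1}) − ((d²+2d−1)/(3d−1))·Σ_{j=k}^{2k−1} Δⱼ + (d(d−1)/(3d−1))·g − ((d−1)²/(2d(3d−1)))·e(Y). -/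

import Mathlib

open Finset

/-- Number of arcs of the digraph `A` directed from a vertex of `S` to a vertex of `T`. -/
def dArcs {V : Type} [Fintype V] [DecidableEq V] (A : V → V → Prop) [DecidableRel A]
    (S T : Finset V) : ℕ :=
  ((S ×ˢ T).filter fun p => A p.1 p.2).card

/-- Outdegree of `x`. -/
def outDeg {V : Type} [Fintype V] (A : V → V → Prop) [DecidableRel A] (x : V) : ℕ :=
  (Finset.univ.filter fun y => A x y).card

/-- Indegree of `x`. -/
def inDeg {V : Type} [Fintype V] (A : V → V → Prop) [DecidableRel A] (x : V) : ℕ :=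
  (Finset.univ.filter fun y => A y x).card

/-- Degree of `x`: outdegree plus indegree. -/
def deg {V : Type} [Fintype V] (A : V → V → Prop) [DecidableRel A] (x : V) : ℕ :=
  outDeg A x + inDeg A x

/-- `s(x) = max{d⁺(x) − d⁻(x), d⁻(x) − d⁺(x)}`. -/
def sVal {V : Type} [Fintype V] (A : V → V → Prop) [DecidableRel A] (x : V) : ℤ :=
  max ((outDeg A x : ℤ) - (inDeg A x : ℤ)) ((inDeg A x : ℤ) - (outDeg A x : ℤ))

/-- The gap `θ(X₁,X₂) = (e(X₁,Y)+e(Y,X₂)) − (e(X₂,Y)+e(Y,X₁))`. -/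
def gap {V : Type} [Fintype V] [DecidableEq V] (A : V → V → Prop) [DecidableRel A]
    (X₁ X₂ Y : Finset V) : ℤ :=
  ((dArcs A X₁ Y : ℤ) + (dArcs A Y X₂ : ℤ)) - ((dArcs A X₂ Y : ℤ) + (dArcs A Y X₁ : ℤ))

/-- The arc indicator of a digraph. -/
def arcInd {V : Type} (A : V → V → Prop) [DecidableRel A] (u v : V) : ℝ :=
  if A u v then 1 else 0

lemma arcInd_nonneg {V : Type} (A : V → V → Prop) [DecidableRel A] (u v : V) :
    0 ≤ arcInd A u v := by
  unfold arcInd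
  split_ifs <;> norm_num

/-- Weight of the cut from the part of `z`-value `1` to the part of `z`-value `0`, extended
multilinearly to fractional assignments `z`. -/
def fracCut {V : Type} [Fintype V] (w : V → V → ℝ) (z : V → ℝ) : ℝ :=
  ∑ u, ∑ v, w u v * (z u * (1 - z v))

/-- The slope of `fracCut w` in the coordinate `y`. -/
def cutSlope {V : Type} [Fintype V] (w : V → V → ℝ) (z : V → ℝ) (y : V) : ℝ :=
  ∑ v, w y v * (1 - z v) - ∑ u, w u y * z u

section FractionalCut

variable {V : Type} [Fintype V]

lemma fracCut_update [DecidableEq V] {w : V → V → ℝ} (hw : ∀ v, w v v = 0) (z : V → ℝ)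
    (y : V) (t : ℝ) :
    fracCut w (Function.update z y t) =
      fracCut w (Function.update z y 0) + t * cutSlope w z y := by
  have h1 : ∑ v, w y v * (1 - z v) =
      ∑ u, ∑ v, if u = y then w u v * (1 - z v) else 0 := by
    symm
    rw [Finset.sum_eq_single y]
    · simp
    · intro u _ hu
      simp [hu]
    · simp
  have h2 : ∑ u, w u y * z u = ∑ u, ∑ v, if v = y then w u v * z u else 0 := by
    simp
  rw [cutSlope, h1, h2, fracCut, fracCut, ← Finset.sum_sub_distrib, Finset.mul_sum,
    ← Finset.sum_add_distrib]
  refine Finset.sum_congr rfl fun u _ => ?_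
  rw [← Finset.sum_sub_distrib, Finset.mul_sum, ← Finset.sum_add_distrib]
  refine Finset.sum_congr rfl fun v _ => ?_
  by_cases hu : u = y
  · by_cases hv : v = y
    · subst hu
      subst hv
      simp [hw]
    · subst hu
      simp [hv]
      ring
  · by_cases hv : v = y
    · subst hv
      simp [hu]
      ring
    · simp [hu, hv]

lemma abs_cutSlope_le {w : V → V → ℝ} (hw : ∀ u v, 0 ≤ w u v) {z : V → ℝ}
    (hz : ∀ u, 0 ≤ z u ∧ z u ≤ 1) (y : V) :
    |cutSlope w z y| ≤ ∑ v, w y v + ∑ u, w u y := by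
  have h1 : 0 ≤ ∑ v, w y v * (1 - z v) :=
    Finset.sum_nonneg fun v _ => mul_nonneg (hw _ _) (by linarith [(hz v).2])
  have h2 : ∑ v, w y v * (1 - z v) ≤ ∑ v, w y v :=
    Finset.sum_le_sum fun v _ => mul_le_of_le_one_right (hw _ _) (by linarith [(hz v).1])
  have h3 : 0 ≤ ∑ u, w u y * z u :=
    Finset.sum_nonneg fun u _ => mul_nonneg (hw _ _) (hz u).1
  have h4 : ∑ u, w u y * z u ≤ ∑ u, w u y :=
    Finset.sum_le_sum fun u _ => mul_le_of_le_one_right (hw _ _) (hz u).2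
  rw [cutSlope, abs_le]
  constructor <;> linarith

/-- Squared deviation of the two opposite fractional cuts from prescribed values. -/
def cutDeviation (w : V → V → ℝ) (f₁ f₂ : ℝ) (z : V → ℝ) : ℝ :=
  (fracCut w z - f₁) ^ 2 + (fracCut (fun u v => w v u) z - f₂) ^ 2

lemma exists_round_vertex [DecidableEq V] {w : V → V → ℝ} (hw0 : ∀ v, w v v = 0)
    (hw : ∀ u v, 0 ≤ w u v) (f₁ f₂ : ℝ) {z : V → ℝ} (hz : ∀ u, 0 ≤ z u ∧ z u ≤ 1) (y : V) :
    ∃ t : ℝ, (t = 0 ∨ t = 1) ∧ cutDeviation w f₁ f₂ (Function.update z y t) ≤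
      cutDeviation w f₁ f₂ z + (∑ v, w y v + ∑ u, w u y) ^ 2 / 2 := by
  have e1 := fracCut_update hw0 z y
  have e2 := fracCut_update (w := fun u v => w v u) hw0 z y
  have b1 := sq_le_sq' (abs_le.1 (abs_cutSlope_le hw hz y)).1
    (abs_le.1 (abs_cutSlope_le hw hz y)).2
  have hb := abs_le.1 (abs_cutSlope_le (w := fun u v => w v u) (fun u v => hw v u) hz y)
  have b2 := sq_le_sq' hb.1 hb.2
  have p1 := e1 (z y)
  have p2 := e2 (z y)
  have t1 := e1 1
  have t2 := e2 1
  rw [Function.update_eq_self] at p1 p2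
  by_contra! hcon
  have c0 := hcon 0 (Or.inl rfl)
  have c1 := hcon 1 (Or.inr rfl)
  unfold cutDeviation at c0 c1
  rw [t1, t2, p1, p2] at c1
  rw [p1, p2] at c0
  generalize fracCut w (Function.update z y 0) = a1 at *
  generalize fracCut (fun u v => w v u) (Function.update z y 0) = a2 at *
  generalize cutSlope w z y = D1 at *
  generalize cutSlope (fun u v => w v u) z y = D2 at *
  generalize ∑ v, w y v = s1 at *
  generalize ∑ u, w u y = s2 at *
  obtain ⟨hp0, hp1⟩ := hz y
  generalize z y = p at *
  have hpq : p * (1 - p) ≤ 1 / 4 := by nlinarith [sq_nonneg (p - 1 / 2)]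
  have hD : D1 ^ 2 + D2 ^ 2 ≤ 2 * (s1 + s2) ^ 2 := by nlinarith
  have hvar : p * (1 - p) * (D1 ^ 2 + D2 ^ 2) ≤ (s1 + s2) ^ 2 / 2 := by
    calc p * (1 - p) * (D1 ^ 2 + D2 ^ 2) ≤ 1 / 4 * (2 * (s1 + s2) ^ 2) := by
          gcongr
      _ = _ := by ring
  have key : p * ((a1 + 1 * D1 - f₁) ^ 2 + (a2 + 1 * D2 - f₂) ^ 2) +
      (1 - p) * ((a1 - f₁) ^ 2 + (a2 - f₂) ^ 2) =
      (a1 + p * D1 - f₁) ^ 2 + (a2 + p * D2 - f₂) ^ 2 + p * (1 - p) * (D1 ^ 2 + D2 ^ 2) := by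
    ring
  rcases hp0.eq_or_lt with h | h
  · nlinarith
  · have := mul_lt_mul_of_pos_left c1 h
    have := mul_le_mul_of_nonneg_left c0.le (sub_nonneg.2 hp1)
    nlinarith

lemma exists_round [DecidableEq V] {w : V → V → ℝ} (hw0 : ∀ v, w v v = 0)
    (hw : ∀ u v, 0 ≤ w u v) (f₁ f₂ : ℝ) (S : Finset V) {z : V → ℝ}
    (hz : ∀ u, 0 ≤ z u ∧ z u ≤ 1) :
    ∃ z' : V → ℝ, (∀ u, 0 ≤ z' u ∧ z' u ≤ 1) ∧ (∀ u ∈ S, z' u = 0 ∨ z' u = 1) ∧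
      (∀ u ∉ S, z' u = z u) ∧ cutDeviation w f₁ f₂ z' ≤
        cutDeviation w f₁ f₂ z + ∑ y ∈ S, (∑ v, w y v + ∑ u, w u y) ^ 2 / 2 := by
  induction S using Finset.induction_on with
  | empty => exact ⟨z, hz, by simp, by simp, by simp⟩
  | insert y S hy ih =>
    obtain ⟨z₁, h1, h2, h3, h4⟩ := ih
    obtain ⟨t, ht, hle⟩ := exists_round_vertex hw0 hw f₁ f₂ h1 y
    refine ⟨Function.update z₁ y t, fun u => ?_, fun u hu => ?_, fun u hu => ?_, ?_⟩
    · by_cases huy : u = y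
      · subst huy
        rcases ht with rfl | rfl <;> simp
      · simpa [huy] using h1 u
    · by_cases huy : u = y
      · subst huy
        simpa using ht
      · simpa [huy] using h2 u (Finset.mem_of_mem_insert_of_ne hu huy)
    · rw [Finset.mem_insert, not_or] at hu
      simpa [hu.1] using h3 u hu.2
    · rw [Finset.sum_insert hy]
      linarith

end FractionalCut

section Degrees

variable {V : Type} [Fintype V] (A : V → V → Prop) [DecidableRel A]

lemma outDeg_eq_sum (x : V) : (outDeg A x : ℝ) = ∑ v, arcInd A x v := by
  simp [outDeg, arcInd]

lemma inDeg_eq_sum (x : V) : (inDeg A x : ℝ) = ∑ u, arcInd A u x := by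
  simp [inDeg, arcInd]

lemma dArcs_eq_sum [DecidableEq V] (S T : Finset V) :
    (dArcs A S T : ℝ) = ∑ u ∈ S, ∑ v ∈ T, arcInd A u v := by
  rw [← Finset.sum_product']
  simp [dArcs, arcInd]

lemma sVal_cast (x : V) : (sVal A x : ℝ) =
    max (outDeg A x : ℝ) (inDeg A x) - min (outDeg A x : ℝ) (inDeg A x) := by
  rw [max_sub_min_eq_abs, sVal, abs_sub_comm, abs_eq_max_neg]
  push_cast
  simp

lemma outDeg_add_inDeg (x : V) : (outDeg A x : ℝ) + inDeg A x =
    sVal A x + 2 * min (outDeg A x : ℝ) (inDeg A x) := by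
  rw [sVal_cast, ← max_add_min (outDeg A x : ℝ) (inDeg A x)]
  ring

lemma sVal_nonneg (x : V) : 0 ≤ sVal A x := by
  unfold sVal
  omega

lemma fracCut_eq_dArcs [DecidableEq V] {z : V → ℝ} (hz : ∀ u, z u = 0 ∨ z u = 1) :
    fracCut (arcInd A) z = dArcs A {u | z u = 1} {u | ¬ z u = 1} := by
  rw [dArcs_eq_sum, fracCut, Finset.sum_filter]
  refine Finset.sum_congr rfl fun u _ => ?_
  rw [Finset.sum_filter]
  rcases hz u with hu | hu
  · simp [hu]
  · simp only [hu, if_true]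
    refine Finset.sum_congr rfl fun v _ => ?_
    rcases hz v with hv | hv <;> simp [hv]

lemma fracCut_swap_eq_dArcs [DecidableEq V] {z : V → ℝ} (hz : ∀ u, z u = 0 ∨ z u = 1) :
    fracCut (fun u v => arcInd A v u) z = dArcs A {u | ¬ z u = 1} {u | z u = 1} := by
  rw [dArcs_eq_sum, fracCut, Finset.sum_comm, Finset.sum_filter]
  refine Finset.sum_congr rfl fun u _ => ?_
  rw [Finset.sum_filter]
  rcases hz u with hu | hu
  · rw [if_pos (by simp [hu])]
    refine Finset.sum_congr rfl fun v _ => ?_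
    rcases hz v with hv | hv <;> simp [hu, hv]
  · simp [hu]

/-- A fractional assignment taking `0`/`1` values off `Y` can be rounded on `Y` so that both
opposite cuts drop by at most `ε * m`, provided the degrees in `Y` are small. -/
lemma exists_bipartition_of_fracCut [DecidableEq V] (hirr : ∀ v, ¬ A v v) {m : ℕ}
    (hm : m = dArcs A Finset.univ Finset.univ) {Y : Finset V} {ε : ℝ} (hε : 0 < ε)
    (hdeg : ∀ y ∈ Y, (deg A y : ℝ) ≤ ε ^ 2 * m / 4) {z : V → ℝ}
    (hz : ∀ u, 0 ≤ z u ∧ z u ≤ 1) (hzY : ∀ u ∉ Y, z u = 0 ∨ z u = 1) :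
    ∃ V₁ V₂ : Finset V, V₁ ∪ V₂ = Finset.univ ∧ Disjoint V₁ V₂ ∧
      fracCut (arcInd A) z - ε * m ≤ dArcs A V₁ V₂ ∧
      fracCut (fun u v => arcInd A v u) z - ε * m ≤ dArcs A V₂ V₁ := by
  obtain ⟨z', h1, h2, h3, h4⟩ := exists_round (w := arcInd A)
    (fun v => by simp [arcInd, hirr]) (arcInd_nonneg A) (fracCut (arcInd A) z)
    (fracCut (fun u v => arcInd A v u) z) Y hz
  have hz' : ∀ u, z' u = 0 ∨ z' u = 1 := fun u => by
    by_cases hu : u ∈ Y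
    · exact h2 u hu
    · rw [h3 u hu]
      exact hzY u hu
  have hsum : ∑ y, (deg A y : ℝ) = 2 * m := by
    simp only [deg, Nat.cast_add, Finset.sum_add_distrib, outDeg_eq_sum, inDeg_eq_sum]
    rw [Finset.sum_comm (f := fun y u => arcInd A u y), hm, dArcs_eq_sum]
    ring
  have hvar : ∑ y ∈ Y, (∑ v, arcInd A y v + ∑ u, arcInd A u y) ^ 2 / 2 ≤ (ε * m) ^ 2 := by
    calc ∑ y ∈ Y, (∑ v, arcInd A y v + ∑ u, arcInd A u y) ^ 2 / 2
        ≤ ∑ y ∈ Y, ε ^ 2 * m / 8 * (deg A y : ℝ) := by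
          refine Finset.sum_le_sum fun y hy => ?_
          rw [← outDeg_eq_sum, ← inDeg_eq_sum, ← Nat.cast_add, ← deg]
          nlinarith [hdeg y hy, Nat.cast_nonneg (α := ℝ) (deg A y)]
      _ ≤ ∑ y, ε ^ 2 * m / 8 * (deg A y : ℝ) :=
          Finset.sum_le_univ_sum_of_nonneg fun y => by positivity
      _ = (ε * m) ^ 2 / 4 := by
          rw [← Finset.mul_sum, hsum]
          ring
      _ ≤ (ε * m) ^ 2 := by linarith [sq_nonneg (ε * m)]
  have hdev : cutDeviation (arcInd A) (fracCut (arcInd A) z)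
      (fracCut (fun u v => arcInd A v u) z) z = 0 := by
    simp [cutDeviation]
  rw [hdev, zero_add, cutDeviation, fracCut_eq_dArcs A hz', fracCut_swap_eq_dArcs A hz'] at h4
  have hεm : 0 ≤ ε * m := by positivity
  refine ⟨({u | z' u = 1} : Finset V), ({u | ¬ z' u = 1} : Finset V),
    Finset.filter_union_filter_not_eq _ _, Finset.disjoint_filter_filter_not _ _ _, ?_, ?_⟩
  · have := abs_le_of_sq_le_sq' ((le_add_of_nonneg_right (sq_nonneg _)).trans
      (h4.trans hvar)) hεm
    linarith [this.1]
  · have := abs_le_of_sq_le_sq' ((le_add_of_nonneg_left (sq_nonneg _)).trans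
      (h4.trans hvar)) hεm
    linarith [this.1]

end Degrees

section SignedSums

variable {V : Type} [DecidableEq V] {s : V → ℝ} {θ : ℝ}

lemma exists_signed_sum_small (S : Finset V) (hs : ∀ x ∈ S, 0 ≤ s x ∧ s x < θ) (t : ℝ) :
    ∃ R ⊆ S, |t + 2 * ∑ x ∈ R, s x - ∑ x ∈ S, s x| < θ ∨
      |t + 2 * ∑ x ∈ R, s x - ∑ x ∈ S, s x| ≤ |t| - ∑ x ∈ S, s x := by
  induction S using Finset.induction_on generalizing t with
  | empty => exact ⟨∅, by simp, by simp⟩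
  | insert a S ha ih =>
    have hS : ∀ x ∈ S, 0 ≤ s x ∧ s x < θ := fun x hx => hs x (Finset.mem_insert_of_mem hx)
    obtain ⟨ha0, haθ⟩ := hs a (Finset.mem_insert_self a S)
    have hsum : 0 ≤ ∑ x ∈ S, s x := Finset.sum_nonneg fun x hx => (hS x hx).1
    have finish : ∀ t' r : ℝ, |t'| = |(|t| - s a)| →
        (|r| < θ ∨ |r| ≤ |t'| - ∑ x ∈ S, s x) →
        (|r| < θ ∨ |r| ≤ |t| - (s a + ∑ x ∈ S, s x)) := by
      intro t' r ht' hr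
      rcases hr with hr | hr
      · exact Or.inl hr
      · rcases le_total (s a) |t| with h | h
        · rw [abs_of_nonneg (sub_nonneg.2 h)] at ht'
          right
          linarith
        · rw [abs_of_nonpos (sub_nonpos.2 h)] at ht'
          left
          linarith [abs_nonneg t]
    rw [Finset.sum_insert ha]
    rcases le_total 0 t with h | h
    · obtain ⟨R, hR, hr⟩ := ih hS (t - s a)
      refine ⟨R, hR.trans (Finset.subset_insert _ _), ?_⟩
      rw [show t + 2 * ∑ x ∈ R, s x - (s a + ∑ x ∈ S, s x) =
        t - s a + 2 * ∑ x ∈ R, s x - ∑ x ∈ S, s x by ring]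
      exact finish _ _ (by rw [abs_of_nonneg h]) hr
    · obtain ⟨R, hR, hr⟩ := ih hS (t + s a)
      refine ⟨insert a R, Finset.insert_subset_insert _ hR, ?_⟩
      rw [Finset.sum_insert fun h' => ha (hR h'),
        show t + 2 * (s a + ∑ x ∈ R, s x) - (s a + ∑ x ∈ S, s x) =
        t + s a + 2 * ∑ x ∈ R, s x - ∑ x ∈ S, s x by ring]
      exact finish _ _ (by rw [abs_of_nonpos h, ← abs_neg (t + s a)]; congr 1; ring) hr

/-- If no signed sum over `X` is below `θ`, then a signed sum over the part of `X` with large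
values exceeds `θ` by the total of the small values. -/
lemma add_sum_le_abs_signed_sum {X X' : Finset V} (hX' : X' ⊆ X)
    (hs : ∀ x ∈ X \ X', 0 ≤ s x ∧ s x < θ)
    (hall : ∀ Q ⊆ X, θ ≤ |2 * ∑ x ∈ Q, s x - ∑ x ∈ X, s x|) {Q : Finset V} (hQ : Q ⊆ X') :
    θ + ∑ x ∈ X \ X', s x ≤ |2 * ∑ x ∈ Q, s x - ∑ x ∈ X', s x| := by
  obtain ⟨R, hR, hr⟩ := exists_signed_sum_small (X \ X') hs
    (2 * ∑ x ∈ Q, s x - ∑ x ∈ X', s x)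
  have hdisj : Disjoint Q R := Finset.disjoint_of_subset_left hQ
    (Finset.disjoint_of_subset_right hR Finset.disjoint_sdiff)
  have h := hall (Q ∪ R) (Finset.union_subset (hQ.trans hX') (hR.trans Finset.sdiff_subset))
  rw [Finset.sum_union hdisj, ← Finset.sum_sdiff hX',
    show 2 * (∑ x ∈ Q, s x + ∑ x ∈ R, s x) - (∑ x ∈ X \ X', s x + ∑ x ∈ X', s x) =
    2 * ∑ x ∈ Q, s x - ∑ x ∈ X', s x + 2 * ∑ x ∈ R, s x - ∑ x ∈ X \ X', s x by ring] at h
  rcases hr with hr | hr <;> linarith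

lemma le_signed_sum_of_exchange {X' : Finset V} {τ n : ℝ} (hτ : θ ≤ τ) (hn : n < 2 * θ)
    (hs : ∀ x ∈ X', θ ≤ s x ∧ s x ≤ n)
    (hall : ∀ Q ⊆ X', τ ≤ |2 * ∑ x ∈ Q, s x - ∑ x ∈ X', s x|) (j : ℕ) :
    ∀ P ⊆ X', ∀ Q ⊆ X', P.card = Q.card → (P \ Q).card = j →
      τ ≤ 2 * ∑ x ∈ P, s x - ∑ x ∈ X', s x → τ ≤ 2 * ∑ x ∈ Q, s x - ∑ x ∈ X', s x := by
  induction j with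
  | zero =>
    intro P _ Q _ hc hj hT
    rw [Finset.card_eq_zero, Finset.sdiff_eq_empty_iff_subset] at hj
    rwa [← Finset.eq_of_subset_of_card_le hj hc.ge]
  | succ j ih =>
    intro P hP Q hQ hc hj hT
    obtain ⟨x, hx⟩ : (P \ Q).Nonempty := Finset.card_pos.1 (by omega)
    have hj' : (Q \ P).card = j + 1 := by
      rw [← hj]
      exact Finset.card_sdiff_comm hc.symm
    obtain ⟨y, hy⟩ : (Q \ P).Nonempty := Finset.card_pos.1 (by omega)
    rw [Finset.mem_sdiff] at hx hy
    have hxy : y ∉ P.erase x := fun h => hy.2 (Finset.mem_of_mem_erase h)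
    have hsub : insert y (P.erase x) ⊆ X' :=
      Finset.insert_subset (hQ hy.1) ((Finset.erase_subset _ _).trans hP)
    have hsum : ∑ z ∈ insert y (P.erase x), s z = s y + (∑ z ∈ P, s z - s x) := by
      rw [Finset.sum_insert hxy, ← Finset.add_sum_erase P s hx.1]
      ring
    refine ih (insert y (P.erase x)) hsub Q hQ ?_ ?_ ?_
    · rw [Finset.card_insert_of_notMem hxy, Finset.card_erase_add_one hx.1, hc]
    · rw [Finset.insert_sdiff_of_mem _ hy.1, Finset.erase_sdiff_comm,
        Finset.card_erase_of_mem (Finset.mem_sdiff.2 hx), hj]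
      rfl
    · have h := hall _ hsub
      rw [hsum] at h ⊢
      have h1 := hs x (hP hx.1)
      have h2 := hs y (hQ hy.1)
      rcases le_abs.1 h with h | h <;> linarith

lemma le_signed_sum_of_card {X' : Finset V} {τ n : ℝ} (hτ : θ ≤ τ) (hn : n < 2 * θ)
    (hs : ∀ x ∈ X', θ ≤ s x ∧ s x ≤ n)
    (hall : ∀ Q ⊆ X', τ ≤ |2 * ∑ x ∈ Q, s x - ∑ x ∈ X', s x|) {k : ℕ}
    (hcard : X'.card = 2 * k + 1) {Q : Finset V} (hQ : Q ⊆ X') (hQc : Q.card = k + 1) :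
    τ ≤ 2 * ∑ x ∈ Q, s x - ∑ x ∈ X', s x := by
  by_contra! hlt
  have hneg : τ ≤ -(2 * ∑ x ∈ Q, s x - ∑ x ∈ X', s x) := by
    rcases le_abs.1 (hall Q hQ) with h | h
    · linarith
    · exact h
  obtain ⟨q, hq⟩ : Q.Nonempty := Finset.card_pos.1 (by omega)
  have hq' : q ∉ X' \ Q := fun h => (Finset.mem_sdiff.1 h).2 hq
  refine hlt.not_ge (le_signed_sum_of_exchange hτ hn hs hall _ (insert q (X' \ Q))
    (Finset.insert_subset (hQ hq) Finset.sdiff_subset) Q hQ ?_ rfl ?_)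
  · rw [Finset.card_insert_of_notMem hq', Finset.card_sdiff_of_subset hQ]
    omega
  · rw [Finset.sum_insert hq']
    have := Finset.sum_sdiff (f := s) hQ
    have := hs q (hQ hq)
    linarith

end SignedSums

section Evaluation

variable {V : Type} [Fintype V] [DecidableEq V]

lemma fracCut_eq_of_const {w : V → V → ℝ} {X Y : Finset V} (hXY : X ∪ Y = Finset.univ)
    (hdXY : Disjoint X Y) (hX : ∀ x ∈ X, ∀ x' ∈ X, w x x' = 0) {p : ℝ} {z : V → ℝ}
    (hz : ∀ y ∈ Y, z y = p) :
    fracCut w z = ∑ x ∈ X, (z x * ((1 - p) * ∑ v, w x v) + (1 - z x) * (p * ∑ u, w u x)) +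
      p * (1 - p) * ∑ u ∈ Y, ∑ v ∈ Y, w u v := by
  have split : ∀ f : V → ℝ, ∑ v, f v = ∑ v ∈ X, f v + ∑ v ∈ Y, f v := fun f => by
    rw [← hXY, Finset.sum_union hdXY]
  have hout : ∀ x ∈ X, ∑ v, w x v = ∑ v ∈ Y, w x v := fun x hx => by
    rw [split, Finset.sum_eq_zero (hX x hx), zero_add]
  have hin : ∀ x ∈ X, ∑ u, w u x = ∑ u ∈ Y, w u x := fun x hx => by
    rw [split, Finset.sum_eq_zero fun u hu => hX u hu x hx, zero_add]
  have h1 : ∑ u ∈ X, ∑ v, w u v * (z u * (1 - z v)) =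
      ∑ x ∈ X, z x * ((1 - p) * ∑ v, w x v) := by
    refine Finset.sum_congr rfl fun x hx => ?_
    rw [split, Finset.sum_eq_zero fun v hv => by rw [hX x hx v hv, zero_mul], zero_add,
      hout x hx, Finset.mul_sum, Finset.mul_sum]
    refine Finset.sum_congr rfl fun v hv => ?_
    rw [hz v hv]
    ring
  have h2 : ∑ u ∈ Y, ∑ v ∈ X, w u v * (z u * (1 - z v)) =
      ∑ x ∈ X, (1 - z x) * (p * ∑ u, w u x) := by
    rw [Finset.sum_comm]
    refine Finset.sum_congr rfl fun x hx => ?_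
    rw [hin x hx, Finset.mul_sum, Finset.mul_sum]
    refine Finset.sum_congr rfl fun u hu => ?_
    rw [hz u hu]
    ring
  have h3 : ∑ u ∈ Y, ∑ v ∈ Y, w u v * (z u * (1 - z v)) =
      p * (1 - p) * ∑ u ∈ Y, ∑ v ∈ Y, w u v := by
    rw [Finset.mul_sum]
    refine Finset.sum_congr rfl fun u hu => ?_
    rw [Finset.mul_sum]
    refine Finset.sum_congr rfl fun v hv => ?_
    rw [hz u hu, hz v hv]
    ring
  rw [fracCut, split, h1]
  simp_rw [split (fun v => w _ v * _)]
  rw [Finset.sum_add_distrib, h2, h3, Finset.sum_add_distrib, add_assoc]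

variable (A : V → V → Prop) [DecidableRel A]

lemma arcInd_eq_zero_of_dArcs_eq_zero {X : Finset V} (heX : dArcs A X X = 0) :
    ∀ x ∈ X, ∀ x' ∈ X, arcInd A x x' = 0 := by
  intro x hx x' hx'
  rw [dArcs, Finset.card_eq_zero, Finset.filter_eq_empty_iff] at heX
  simpa [arcInd] using heX (Finset.mk_mem_product hx hx')

/-- Rounding a partition of `X` completed by the constant value `p` on `Y`. -/
lemma exists_bipartition_of_subset (hirr : ∀ v, ¬ A v v) {m : ℕ}
    (hm : m = dArcs A Finset.univ Finset.univ) {X Y : Finset V}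
    (hXY : X ∪ Y = Finset.univ) (hdXY : Disjoint X Y) (heX : dArcs A X X = 0) {ε : ℝ}
    (hε : 0 < ε) (hdeg : ∀ y ∈ Y, (deg A y : ℝ) ≤ ε ^ 2 * m / 4) {X₁ : Finset V}
    (hX₁ : X₁ ⊆ X) {p : ℝ} (hp0 : 0 ≤ p) (hp1 : p ≤ 1) :
    ∃ V₁ V₂ : Finset V, V₁ ∪ V₂ = Finset.univ ∧ Disjoint V₁ V₂ ∧
      ∑ x ∈ X, (if x ∈ X₁ then (1 - p) * (outDeg A x : ℝ) else p * inDeg A x) +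
        p * (1 - p) * dArcs A Y Y - ε * m ≤ dArcs A V₁ V₂ ∧
      ∑ x ∈ X, (if x ∈ X₁ then (1 - p) * (inDeg A x : ℝ) else p * outDeg A x) +
        p * (1 - p) * dArcs A Y Y - ε * m ≤ dArcs A V₂ V₁ := by
  set z : V → ℝ := fun x => if x ∈ X₁ then 1 else if x ∈ Y then p else 0 with hzdef
  have hzX : ∀ x ∈ X, z x = if x ∈ X₁ then 1 else 0 := fun x hx => by
    simp [hzdef, Finset.disjoint_left.1 hdXY hx]
  have hzY : ∀ y ∈ Y, z y = p := fun y hy => by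
    have : y ∉ X₁ := fun h => Finset.disjoint_left.1 hdXY (hX₁ h) hy
    simp [hzdef, this, hy]
  have hA := arcInd_eq_zero_of_dArcs_eq_zero A heX
  obtain ⟨V₁, V₂, h1, h2, h3, h4⟩ := exists_bipartition_of_fracCut A hirr hm hε hdeg (z := z)
    (fun u => by
      simp only [hzdef]
      split_ifs <;> constructor <;> linarith)
    (fun u hu => by
      by_cases h : u ∈ X₁ <;> simp [hzdef, hu, h])
  refine ⟨V₁, V₂, h1, h2, ?_, ?_⟩
  · refine le_of_eq_of_le ?_ h3
    rw [fracCut_eq_of_const hXY hdXY hA hzY, dArcs_eq_sum]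
    congr 2
    refine Finset.sum_congr rfl fun x hx => ?_
    rw [hzX x hx, outDeg_eq_sum, inDeg_eq_sum]
    split_ifs <;> simp
  · refine le_of_eq_of_le ?_ h4
    rw [fracCut_eq_of_const hXY hdXY (fun x hx x' hx' => hA x' hx' x hx) hzY, dArcs_eq_sum,
      Finset.sum_comm (s := Y)]
    congr 2
    refine Finset.sum_congr rfl fun x hx => ?_
    rw [hzX x hx, outDeg_eq_sum, inDeg_eq_sum]
    split_ifs <;> simp

lemma arcs_eq_sum_add {X Y : Finset V} (hXY : X ∪ Y = Finset.univ) (hdXY : Disjoint X Y)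
    (heX : dArcs A X X = 0) :
    (dArcs A Finset.univ Finset.univ : ℝ) =
      ∑ x ∈ X, ((outDeg A x : ℝ) + inDeg A x) + dArcs A Y Y := by
  have hA := arcInd_eq_zero_of_dArcs_eq_zero A heX
  have hsplit : ∀ f : V → ℝ, ∑ v, f v = ∑ v ∈ X, f v + ∑ v ∈ Y, f v := fun f => by
    rw [← hXY, Finset.sum_union hdXY]
  have hin : ∀ x ∈ X, (inDeg A x : ℝ) = ∑ u ∈ Y, arcInd A u x := fun x hx => by
    rw [inDeg_eq_sum, hsplit, Finset.sum_eq_zero fun u hu => hA u hu x hx, zero_add]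
  rw [Finset.sum_add_distrib, Finset.sum_congr rfl hin, Finset.sum_comm, dArcs_eq_sum, hsplit]
  simp_rw [outDeg_eq_sum, dArcs_eq_sum]
  rw [add_assoc, ← Finset.sum_add_distrib]
  simp_rw [← hsplit]

lemma gap_eq_sum {X Y : Finset V} (hXY : X ∪ Y = Finset.univ) (hdXY : Disjoint X Y)
    (heX : dArcs A X X = 0) {X₁ : Finset V} (hX₁ : X₁ ⊆ X) :
    (gap A X₁ (X \ X₁) Y : ℝ) = ∑ x ∈ X,
      if x ∈ X₁ then (outDeg A x : ℝ) - inDeg A x else (inDeg A x : ℝ) - outDeg A x := by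
  have hA := arcInd_eq_zero_of_dArcs_eq_zero A heX
  have hsplit : ∀ f : V → ℝ, ∑ v, f v = ∑ v ∈ X, f v + ∑ v ∈ Y, f v := fun f => by
    rw [← hXY, Finset.sum_union hdXY]
  have hout : ∀ S ⊆ X, (dArcs A S Y : ℝ) = ∑ x ∈ S, (outDeg A x : ℝ) := fun S hS => by
    rw [dArcs_eq_sum]
    refine Finset.sum_congr rfl fun x hx => ?_
    rw [outDeg_eq_sum, hsplit, Finset.sum_eq_zero (hA x (hS hx)), zero_add]
  have hin : ∀ S ⊆ X, (dArcs A Y S : ℝ) = ∑ x ∈ S, (inDeg A x : ℝ) := fun S hS => by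
    rw [dArcs_eq_sum, Finset.sum_comm]
    refine Finset.sum_congr rfl fun x hx => ?_
    rw [inDeg_eq_sum, hsplit, Finset.sum_eq_zero fun u hu => hA u hu x (hS hx), zero_add]
  have h2 : X \ X₁ ⊆ X := Finset.sdiff_subset
  rw [← Finset.sum_sdiff hX₁, Finset.sum_congr (s₁ := X₁) rfl fun x hx => if_pos hx,
    Finset.sum_congr (s₁ := X \ X₁) rfl fun x hx => if_neg (Finset.mem_sdiff.1 hx).2, gap]
  push_cast
  rw [hout _ hX₁, hout _ h2, hin _ hX₁, hin _ h2, Finset.sum_sub_distrib,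
    Finset.sum_sub_distrib]
  ring

lemma exists_gap_eq_signed_sum {X Y : Finset V} (hXY : X ∪ Y = Finset.univ)
    (hdXY : Disjoint X Y) (heX : dArcs A X X = 0) {Q : Finset V} (hQ : Q ⊆ X) :
    ∃ X₁ ⊆ X, (gap A X₁ (X \ X₁) Y : ℝ) =
      2 * ∑ x ∈ Q, (sVal A x : ℝ) - ∑ x ∈ X, (sVal A x : ℝ) := by
  refine ⟨X.filter fun x => (x ∈ Q ↔ inDeg A x ≤ outDeg A x), Finset.filter_subset _ _, ?_⟩
  rw [gap_eq_sum A hXY hdXY heX (Finset.filter_subset _ _),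
    ← Finset.inter_eq_right.2 hQ, ← Finset.filter_mem_eq_inter, Finset.sum_filter,
    Finset.mul_sum, ← Finset.sum_sub_distrib]
  refine Finset.sum_congr rfl fun x hx => ?_
  rw [sVal_cast]
  by_cases h : inDeg A x ≤ outDeg A x
  · have h' : (inDeg A x : ℝ) ≤ outDeg A x := by exact_mod_cast h
    by_cases hxQ : x ∈ Q
    · simp [hx, h, h', hxQ]
      ring
    · simp [hx, h, h', hxQ]
  · have h' : (outDeg A x : ℝ) ≤ inDeg A x := by exact_mod_cast (not_le.1 h).le
    by_cases hxQ : x ∈ Q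
    · simp [hx, h, h', hxQ]
      ring
    · simp [hx, h, h', hxQ]

end Evaluation

/-- Lower bounds for the two fractional cuts obtained by placing the vertices of `P` with
`i ≤ o` and all vertices outside `P` on the heavier side. -/
lemma sum_le_sum_of_side {V : Type} [DecidableEq V] {o i : V → ℝ} (ho : ∀ x, 0 ≤ o x)
    (hi : ∀ x, 0 ≤ i x) {X P N S : Finset V} (hX : X = P ∪ N ∪ S) (hPN : Disjoint P N)
    (hPS : Disjoint (P ∪ N) S) (hN : ∀ x ∈ N, o x ≤ i x) {p : ℝ} (hp0 : 0 ≤ p)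
    (hp : p ≤ 1 - p) :
    (1 - p) * (∑ x ∈ N, min (o x) (i x) + ∑ x ∈ S, min (o x) (i x)) +
        p * ∑ x ∈ P, max (o x) (i x) ≤
      ∑ x ∈ X, (if x ∈ X.filter (fun x => x ∉ P ∨ i x ≤ o x) then (1 - p) * o x
        else p * i x) ∧
    (1 - p) * (∑ x ∈ N, max (o x) (i x) + ∑ x ∈ S, min (o x) (i x)) +
        p * ∑ x ∈ P, min (o x) (i x) ≤
      ∑ x ∈ X, (if x ∈ X.filter (fun x => x ∉ P ∨ i x ≤ o x) then (1 - p) * i x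
        else p * o x) := by
  have hq : 0 ≤ 1 - p := hp0.trans hp
  have hNP : ∀ x ∈ N, x ∉ P := fun x hx hx' => Finset.disjoint_left.1 hPN hx' hx
  have hSP : ∀ x ∈ S, x ∉ P := fun x hx hx' =>
    Finset.disjoint_left.1 hPS (Finset.mem_union_left _ hx') hx
  have hmem : (∀ x ∈ P, x ∈ X) ∧ (∀ x ∈ N, x ∈ X) ∧ ∀ x ∈ S, x ∈ X := by
    subst hX
    refine ⟨fun x hx => ?_, fun x hx => ?_, fun x hx => ?_⟩ <;> simp [hx]
  obtain ⟨hP', hN', hS'⟩ := hmem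
  have hsplit : ∀ f : V → ℝ, ∑ x ∈ X, f x = ∑ x ∈ P, f x + ∑ x ∈ N, f x + ∑ x ∈ S, f x :=
    fun f => by rw [hX, Finset.sum_union hPS, Finset.sum_union hPN]
  have hscale : ∀ {a b : ℝ}, 0 ≤ a → a ≤ b → p * a ≤ (1 - p) * b := fun ha hab =>
    mul_le_mul hp hab ha hq
  rw [hsplit, hsplit, mul_add, mul_add, Finset.mul_sum, Finset.mul_sum, Finset.mul_sum,
    Finset.mul_sum, Finset.mul_sum]
  constructor
  · have h1 : ∀ x ∈ P, p * max (o x) (i x) ≤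
        if x ∈ X.filter (fun x => x ∉ P ∨ i x ≤ o x) then (1 - p) * o x else p * i x := by
      intro x hx
      by_cases h : i x ≤ o x
      · simpa [hx, hP' x hx, h] using hscale (ho x) le_rfl
      · simp [hx, hP' x hx, h, max_eq_right (not_le.1 h).le]
    have h2 : ∀ x ∈ N, (1 - p) * min (o x) (i x) ≤
        if x ∈ X.filter (fun x => x ∉ P ∨ i x ≤ o x) then (1 - p) * o x else p * i x := by
      intro x hx
      simpa [hN' x hx, hNP x hx] using mul_le_mul_of_nonneg_left (min_le_left _ _) hq
    have h3 : ∀ x ∈ S, (1 - p) * min (o x) (i x) ≤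
        if x ∈ X.filter (fun x => x ∉ P ∨ i x ≤ o x) then (1 - p) * o x else p * i x := by
      intro x hx
      simpa [hS' x hx, hSP x hx] using mul_le_mul_of_nonneg_left (min_le_left _ _) hq
    linarith [Finset.sum_le_sum h1, Finset.sum_le_sum h2, Finset.sum_le_sum h3]
  · have h1 : ∀ x ∈ P, p * min (o x) (i x) ≤
        if x ∈ X.filter (fun x => x ∉ P ∨ i x ≤ o x) then (1 - p) * i x else p * o x := by
      intro x hx
      by_cases h : i x ≤ o x
      · simpa [hx, hP' x hx, h] using hscale (hi x) le_rfl
      · simp [hx, hP' x hx, h, min_eq_left (not_le.1 h).le]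
    have h2 : ∀ x ∈ N, (1 - p) * max (o x) (i x) ≤
        if x ∈ X.filter (fun x => x ∉ P ∨ i x ≤ o x) then (1 - p) * i x else p * o x := by
      intro x hx
      simp [hN' x hx, hNP x hx, hN x hx]
    have h3 : ∀ x ∈ S, (1 - p) * min (o x) (i x) ≤
        if x ∈ X.filter (fun x => x ∉ P ∨ i x ≤ o x) then (1 - p) * i x else p * o x := by
      intro x hx
      simpa [hS' x hx, hSP x hx] using mul_le_mul_of_nonneg_left (min_le_right _ _) hq
    linarith [Finset.sum_le_sum h1, Finset.sum_le_sum h2, Finset.sum_le_sum h3]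

/-- Among the first `2 * k - 1` indices, a two-colouring has a monochromatic `k`-subset, and its
sum for an antitone function dominates the sum over the last `k` of these indices. -/
lemma exists_monochromatic_index_set {f : ℕ → ℝ} {k : ℕ} (hk : 1 ≤ k)
    (hf : ∀ i ∈ Finset.Icc 1 (2 * k + 1), ∀ j ∈ Finset.Icc 1 (2 * k + 1), i ≤ j → f j ≤ f i)
    {a c : ℕ → Prop} (hac : ∀ j, a j ∨ c j) :
    ∃ I ⊆ Finset.Icc 1 (2 * k + 1), I.card = k ∧
      ((∀ j ∈ I, a j) ∨ ∀ j ∈ I, c j) ∧ ∑ j ∈ Finset.Icc k (2 * k - 1), f j ≤ ∑ j ∈ I, f j := by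
  classical
  obtain ⟨I, hI, hIc, hIac⟩ : ∃ I ⊆ Finset.Icc 1 (2 * k - 1), I.card = k ∧
      ((∀ j ∈ I, a j) ∨ ∀ j ∈ I, c j) := by
    have hc := Finset.card_filter_add_card_filter_not (s := Finset.Icc 1 (2 * k - 1)) a
    rw [Nat.card_Icc] at hc
    rcases le_or_gt k ((Finset.Icc 1 (2 * k - 1)).filter a).card with h | h
    · obtain ⟨I, hI, hIc⟩ := Finset.exists_subset_card_eq h
      exact ⟨I, hI.trans (Finset.filter_subset _ _), hIc,
        Or.inl fun j hj => (Finset.mem_filter.1 (hI hj)).2⟩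
    · have h' : k ≤ ((Finset.Icc 1 (2 * k - 1)).filter fun j => ¬ a j).card := by omega
      obtain ⟨I, hI, hIc⟩ := Finset.exists_subset_card_eq h'
      exact ⟨I, hI.trans (Finset.filter_subset _ _), hIc,
        Or.inr fun j hj => (hac j).resolve_left (Finset.mem_filter.1 (hI hj)).2⟩
  refine ⟨I, hI.trans (Finset.Icc_subset_Icc_right (by omega)), hIc, hIac, ?_⟩
  set C := Finset.Icc k (2 * k - 1) with hC
  have hCc : C.card = I.card := by
    rw [hC, Nat.card_Icc, hIc]
    omega
  have hkmem : k ∈ Finset.Icc 1 (2 * k + 1) := Finset.mem_Icc.2 ⟨hk, by omega⟩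
  have h1 : ∑ j ∈ C \ I, f j ≤ (C \ I).card • f k :=
    Finset.sum_le_card_nsmul _ _ _ fun j hj => by
      have := Finset.mem_Icc.1 (Finset.mem_sdiff.1 hj).1
      exact hf k hkmem j (Finset.mem_Icc.2 (by omega)) this.1
  have h2 : (I \ C).card • f k ≤ ∑ j ∈ I \ C, f j :=
    Finset.card_nsmul_le_sum _ _ _ fun j hj => by
      obtain ⟨hj1, hj2⟩ := Finset.mem_sdiff.1 hj
      have := Finset.mem_Icc.1 (hI hj1)
      rw [hC, Finset.mem_Icc] at hj2
      exact hf j (Finset.mem_Icc.2 (by omega)) k hkmem (by omega)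
  rw [Finset.card_sdiff_comm hCc] at h1
  rw [← Finset.sum_inter_add_sum_sdiff C I f, ← Finset.sum_inter_add_sum_sdiff I C f,
    Finset.inter_comm]
  linarith

/-- The numerical core: the failure of both cut bounds at `p = (d - 1) / (2 * d)` bounds the
balanced part of the degrees. -/
lemma balanced_lt_of_not_cut {d k n BP BN BS SP SN SP₀ SN₀ g e m : ℝ} (hd : 4 ≤ d)
    (hBN : 0 ≤ BN) (hBS : 0 ≤ BS) (he : 0 ≤ e)
    (hm : m = 2 * (BP + BN + BS) + (SP + SN) + g + e)
    (hθ : m < (2 * d - 1) * (SP - SN - g)) (hP : BP + SP ≤ (k + 1) * n) (hSN : SN₀ ≤ SN)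
    (hsum : SP₀ + SN₀ = SP + SN)
    (hno : (d - 1) / (2 * (2 * d - 1)) * m ≤ (1 - (d - 1) / (2 * d)) * (BN + BS) +
        (d - 1) / (2 * d) * (BP + SP) + (d - 1) / (2 * d) * (1 - (d - 1) / (2 * d)) * e →
      (1 - (d - 1) / (2 * d)) * (BN + SN + BS) + (d - 1) / (2 * d) * BP +
        (d - 1) / (2 * d) * (1 - (d - 1) / (2 * d)) * e < (d - 1) / (2 * (2 * d - 1)) * m) :
    BP + BN + BS < 2 * (2 * d - 1) * (k + 1) / (3 * d - 1) * n +
      (d ^ 2 - 5 * d + 2) / (3 * d - 1) * SP₀ - (d ^ 2 + 2 * d - 1) / (3 * d - 1) * SN₀ +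
      d * (d - 1) / (3 * d - 1) * g - (d - 1) ^ 2 / (2 * d * (3 * d - 1)) * e := by
  have hd0 : 0 < d := by linarith
  have hd1 : 0 < 2 * d - 1 := by linarith
  have hd3 : 0 < 3 * d - 1 := by linarith
  have hα : 0 < 2 * d * (2 * d - 1) := by positivity
  have e1 : 2 * d * (2 * d - 1) * ((1 - (d - 1) / (2 * d)) * (BN + BS) +
      (d - 1) / (2 * d) * (BP + SP) + (d - 1) / (2 * d) * (1 - (d - 1) / (2 * d)) * e -
      (d - 1) / (2 * (2 * d - 1)) * m) = (d - 1) ^ 2 * SP - (d - 1) * BP +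
      (3 * d - 1) * (BN + BS) + (d - 1) ^ 2 / (2 * d) * e - d * (d - 1) * (SN + g) := by
    rw [hm]
    field_simp
    ring
  have e2 : 2 * d * (2 * d - 1) * ((d - 1) / (2 * (2 * d - 1)) * m -
      ((1 - (d - 1) / (2 * d)) * (BN + SN + BS) + (d - 1) / (2 * d) * BP +
        (d - 1) / (2 * d) * (1 - (d - 1) / (2 * d)) * e)) = (d - 1) * BP +
      d * (d - 1) * (SP + g - SN) - (3 * d - 1) * (BN + BS + SN) -
      (d - 1) ^ 2 / (2 * d) * e := by
    rw [hm]
    field_simp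
    ring
  have he' : 0 ≤ (d - 1) ^ 2 / (2 * d) * e := by positivity
  have hθ' : 0 < (d - 1) * ((d - 1) * SP - (BP + BN + BS) - d * (SN + g) - e / 2) :=
    mul_pos (by linarith) (by nlinarith)
  have hfirst : 0 ≤ 2 * d * (2 * d - 1) * ((1 - (d - 1) / (2 * d)) * (BN + BS) +
      (d - 1) / (2 * d) * (BP + SP) + (d - 1) / (2 * d) * (1 - (d - 1) / (2 * d)) * e -
      (d - 1) / (2 * (2 * d - 1)) * m) := by
    rw [e1]
    nlinarith [mul_nonneg hd0.le hBN, mul_nonneg hd0.le hBS]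
  have hlt := mul_pos hα (sub_pos.2 (hno (sub_nonneg.1 (nonneg_of_mul_nonneg_right hfirst hα))))
  rw [e2] at hlt
  have e3 : 2 * (2 * d - 1) * (k + 1) / (3 * d - 1) * n +
      (d ^ 2 - 5 * d + 2) / (3 * d - 1) * SP₀ - (d ^ 2 + 2 * d - 1) / (3 * d - 1) * SN₀ +
      d * (d - 1) / (3 * d - 1) * g - (d - 1) ^ 2 / (2 * d * (3 * d - 1)) * e =
      (2 * (2 * d - 1) * ((k + 1) * n) + (d ^ 2 - 5 * d + 2) * SP₀ -
        (d ^ 2 + 2 * d - 1) * SN₀ + d * (d - 1) * g - (d - 1) ^ 2 / (2 * d) * e) /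
        (3 * d - 1) := by
    field_simp
  rw [e3, lt_div_iff₀ hd3]
  obtain rfl : SP₀ = SP + SN - SN₀ := by linarith
  have h1 := mul_le_mul_of_nonneg_left hP hd1.le
  have h2 := mul_nonneg (mul_nonneg hd1.le (by linarith : 0 ≤ d - 1)) (sub_nonneg.2 hSN)
  linarith

/-- Lemma 3.2(3). -/
theorem stmt10 {V : Type} [Fintype V] [DecidableEq V] (A : V → V → Prop) [DecidableRel A]
    (hirr : ∀ v, ¬ A v v)
    (n m : ℕ) (hn : n = Fintype.card V) (hm : m = dArcs A Finset.univ Finset.univ)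
    (d : ℕ) (hd : 4 ≤ d) (hout : ∀ x, d ≤ outDeg A x)
    (X Y : Finset V) (hXY : X ∪ Y = Finset.univ) (hdXY : Disjoint X Y)
    (heX : dArcs A X X = 0)
    (θ : ℤ) (hθ : IsLeast {t : ℤ | ∃ X₁ ⊆ X, t = |gap A X₁ (X \ X₁) Y|} θ)
    (X' : Finset V) (hX' : X' = X.filter fun x => θ ≤ sVal A x)
    (g : ℤ) (hg : g = ∑ x ∈ X \ X', sVal A x)
    (b : ℝ) (hb : b = (∑ x ∈ X, ((deg A x : ℝ) - (sVal A x : ℝ))) / 2)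
    (k : ℕ) (hk : 1 ≤ k) (hcard : X'.card = 2 * k + 1)
    (ε : ℝ) (hε : 0 < ε) (hdeg : ∀ y ∈ Y, (deg A y : ℝ) ≤ ε ^ 2 * m / 4)
    :
    (∃ V₁ V₂ : Finset V, V₁ ∪ V₂ = Finset.univ ∧ Disjoint V₁ V₂ ∧
        (((d : ℝ) - 1) / (2 * (2 * (d : ℝ) - 1)) - ε) * m ≤
          min (dArcs A V₁ V₂ : ℝ) (dArcs A V₂ V₁ : ℝ)) ∨
      ∀ v : ℕ → V,
          X' = (Finset.Icc 1 (2 * k + 1)).image v →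
          Set.InjOn v ↑(Finset.Icc 1 (2 * k + 1)) →
          (∀ i ∈ Finset.Icc 1 (2 * k + 1), ∀ j ∈ Finset.Icc 1 (2 * k + 1), i ≤ j →
            sVal A (v j) ≤ sVal A (v i)) →
        b < 2 * (2 * (d : ℝ) - 1) * ((k : ℝ) + 1) / (3 * (d : ℝ) - 1) * (n : ℝ) +
          ((d : ℝ) ^ 2 - 5 * (d : ℝ) + 2) / (3 * (d : ℝ) - 1) *
            ((∑ j ∈ Finset.Icc 1 (k - 1), (sVal A (v j) : ℝ)) +
              (sVal A (v (2 * k)) : ℝ) + (sVal A (v (2 * k + 1)) : ℝ)) -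
          ((d : ℝ) ^ 2 + 2 * (d : ℝ) - 1) / (3 * (d : ℝ) - 1) *
            (∑ j ∈ Finset.Icc k (2 * k - 1), (sVal A (v j) : ℝ)) +
          (d : ℝ) * ((d : ℝ) - 1) / (3 * (d : ℝ) - 1) * (g : ℝ) -
          ((d : ℝ) - 1) ^ 2 / (2 * (d : ℝ) * (3 * (d : ℝ) - 1)) * (dArcs A Y Y : ℝ) := by
  by_cases hex : ∃ V₁ V₂ : Finset V, V₁ ∪ V₂ = Finset.univ ∧ Disjoint V₁ V₂ ∧
      (((d : ℝ) - 1) / (2 * (2 * (d : ℝ) - 1)) - ε) * m ≤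
        min (dArcs A V₁ V₂ : ℝ) (dArcs A V₂ V₁ : ℝ)
  · exact Or.inl hex
  right
  intro v hv hinj hanti
  have hd' : (4 : ℝ) ≤ d := by exact_mod_cast hd
  have hd1 : (0 : ℝ) < 2 * d - 1 := by linarith
  have hno : ∀ X₁ ⊆ X, ∀ p : ℝ, 0 ≤ p → p ≤ 1 →
      ((d : ℝ) - 1) / (2 * (2 * (d : ℝ) - 1)) * m ≤
        ∑ x ∈ X, (if x ∈ X₁ then (1 - p) * (outDeg A x : ℝ) else p * inDeg A x) +
          p * (1 - p) * dArcs A Y Y →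
      ∑ x ∈ X, (if x ∈ X₁ then (1 - p) * (inDeg A x : ℝ) else p * outDeg A x) +
          p * (1 - p) * dArcs A Y Y < ((d : ℝ) - 1) / (2 * (2 * (d : ℝ) - 1)) * m := by
    intro X₁ hX₁ p hp0 hp1 h1
    by_contra! h2
    obtain ⟨V₁, V₂, hu, hdj, h3, h4⟩ :=
      exists_bipartition_of_subset A hirr hm hXY hdXY heX hε hdeg hX₁ hp0 hp1
    exact hex ⟨V₁, V₂, hu, hdj, le_min (by linarith) (by linarith)⟩
  have hmX : (m : ℝ) = ∑ x ∈ X, ((outDeg A x : ℝ) + inDeg A x) + dArcs A Y Y := by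
    rw [hm]
    exact arcs_eq_sum_add A hXY hdXY heX
  have hθm : (m : ℝ) < (2 * d - 1) * θ := by
    obtain ⟨⟨X₁, hX₁, hθ₁⟩, -⟩ := hθ
    have hgap := gap_eq_sum A hXY hdXY heX hX₁
    have hθ₁' : (θ : ℝ) = |(gap A X₁ (X \ X₁) Y : ℝ)| := by
      rw [hθ₁]
      push_cast
      rfl
    have hsum : ∑ x ∈ X, (if x ∈ X₁ then (1 - (1 / 2 : ℝ)) * (outDeg A x : ℝ)
          else 1 / 2 * inDeg A x) =
        (∑ x ∈ X, ((outDeg A x : ℝ) + inDeg A x) + gap A X₁ (X \ X₁) Y) / 4 := by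
      rw [hgap, ← Finset.sum_add_distrib, Finset.sum_div]
      refine Finset.sum_congr rfl fun x _ => ?_
      split_ifs <;> ring
    have hsum' : ∑ x ∈ X, (if x ∈ X₁ then (1 - (1 / 2 : ℝ)) * (inDeg A x : ℝ)
          else 1 / 2 * outDeg A x) =
        (∑ x ∈ X, ((outDeg A x : ℝ) + inDeg A x) - gap A X₁ (X \ X₁) Y) / 4 := by
      rw [hgap, ← Finset.sum_sub_distrib, Finset.sum_div]
      refine Finset.sum_congr rfl fun x _ => ?_
      split_ifs <;> ring
    have h := hno X₁ hX₁ (1 / 2) (by norm_num) (by norm_num)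
    rw [hsum, hsum'] at h
    have hcm : (2 * (d : ℝ) - 1) * (((d : ℝ) - 1) / (2 * (2 * (d : ℝ) - 1)) * m) =
        (d - 1) / 2 * m := by
      field_simp
    by_contra! hle
    have habs := abs_le.1 hθ₁'.ge
    have hc1 : ((d : ℝ) - 1) / (2 * (2 * (d : ℝ) - 1)) * m ≤ (m - θ) / 4 := by
      refine le_of_mul_le_mul_left ?_ hd1
      rw [hcm]
      linarith
    have := h (by linarith [habs.1])
    linarith [habs.2]
  have hdn : (d : ℝ) * n ≤ m := by
    rw [hm, dArcs_eq_sum]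
    simp_rw [← outDeg_eq_sum]
    rw [hn, ← Finset.card_univ, mul_comm, ← nsmul_eq_mul]
    exact Finset.card_nsmul_le_sum _ _ _ fun x _ => by exact_mod_cast hout x
  have hn2 : (n : ℝ) < 2 * θ := by
    have h1 : (d : ℝ) * n < d * (2 * θ) := by
      have : (0 : ℝ) ≤ θ := by
        by_contra! hneg
        nlinarith [Nat.cast_nonneg (α := ℝ) m]
      linarith
    exact lt_of_mul_lt_mul_left h1 (by linarith)
  have hmax : ∀ x, max (outDeg A x : ℝ) (inDeg A x) ≤ n := fun x => by
    rw [hn]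
    exact max_le (by exact_mod_cast Finset.card_le_univ _)
      (by exact_mod_cast Finset.card_le_univ _)
  have hmin : ∀ x, 0 ≤ min (outDeg A x : ℝ) (inDeg A x) := fun x =>
    le_min (Nat.cast_nonneg _) (Nat.cast_nonneg _)
  have hX'X : X' ⊆ X := hX' ▸ Finset.filter_subset _ _
  have hsmall : ∀ x ∈ X \ X', 0 ≤ (sVal A x : ℝ) ∧ (sVal A x : ℝ) < θ := by
    intro x hx
    rw [hX', Finset.mem_sdiff, Finset.mem_filter, not_and, not_le] at hx
    exact ⟨by exact_mod_cast sVal_nonneg A x, by exact_mod_cast hx.2 hx.1⟩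
  have hlarge : ∀ x ∈ X', (θ : ℝ) ≤ sVal A x ∧ (sVal A x : ℝ) ≤ n := by
    intro x hx
    rw [hX', Finset.mem_filter] at hx
    refine ⟨by exact_mod_cast hx.2, ?_⟩
    rw [sVal_cast]
    linarith [hmax x, hmin x]
  have hall : ∀ Q ⊆ X, (θ : ℝ) ≤ |2 * ∑ x ∈ Q, (sVal A x : ℝ) - ∑ x ∈ X, (sVal A x : ℝ)| := by
    intro Q hQ
    obtain ⟨X₁, hX₁, h⟩ := exists_gap_eq_signed_sum A hXY hdXY heX hQ
    rw [← h]
    exact_mod_cast hθ.2 ⟨X₁, hX₁, rfl⟩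
  have hgR : (g : ℝ) = ∑ x ∈ X \ X', (sVal A x : ℝ) := by
    rw [hg]
    push_cast
    rfl
  have hg0 : 0 ≤ ∑ x ∈ X \ X', (sVal A x : ℝ) := Finset.sum_nonneg fun x hx => (hsmall x hx).1
  obtain ⟨I, hI, hIc, hIac, hIsum⟩ := exists_monochromatic_index_set
    (f := fun j => (sVal A (v j) : ℝ)) hk
    (fun i hi j hj hij => by exact_mod_cast hanti i hi j hj hij)
    (fun j => le_total (outDeg A (v j) : ℝ) (inDeg A (v j)))
  have hinjI : Set.InjOn v I := hinj.mono (Finset.coe_subset.2 hI)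
  set N := I.image v with hNdef
  have hNX' : N ⊆ X' := hv ▸ Finset.image_subset_image hI
  set P := X' \ N with hPdef
  have hNc : N.card = k := by rw [hNdef, Finset.card_image_of_injOn hinjI, hIc]
  have hPc : P.card = k + 1 := by
    rw [hPdef, Finset.card_sdiff_of_subset hNX', hcard, hNc]
    omega
  have hPN : Disjoint P N := Finset.sdiff_disjoint
  have hPNX' : P ∪ N = X' := Finset.sdiff_union_of_subset hNX'
  have hXe : X = P ∪ N ∪ (X \ X') := by rw [hPNX', Finset.union_sdiff_of_subset hX'X]
  have hPS : Disjoint (P ∪ N) (X \ X') := hPNX' ▸ Finset.disjoint_sdiff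
  have hX's : ∑ x ∈ X', (sVal A x : ℝ) =
      ∑ x ∈ P, (sVal A x : ℝ) + ∑ x ∈ N, (sVal A x : ℝ) := by
    rw [← hPNX', Finset.sum_union hPN]
  have hT := le_signed_sum_of_card (τ := θ + ∑ x ∈ X \ X', (sVal A x : ℝ))
    (by linarith) hn2 hlarge
    (fun Q hQ => add_sum_le_abs_signed_sum hX'X hsmall hall hQ) hcard
    (Finset.sdiff_subset : P ⊆ X') hPc
  rw [hX's, ← hgR] at hT
  have hsplit : ∀ f : V → ℝ,
      ∑ x ∈ X, f x = ∑ x ∈ P, f x + ∑ x ∈ N, f x + ∑ x ∈ X \ X', f x := fun f => by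
    rw [← Finset.sum_union hPN, ← Finset.sum_union hPS, ← hXe]
  have hmax_eq : ∀ S : Finset V, ∑ x ∈ S, max (outDeg A x : ℝ) (inDeg A x) =
      ∑ x ∈ S, min (outDeg A x : ℝ) (inDeg A x) + ∑ x ∈ S, (sVal A x : ℝ) := fun S => by
    rw [← Finset.sum_add_distrib]
    exact Finset.sum_congr rfl fun x _ => by rw [sVal_cast]; ring
  have hbB : b = ∑ x ∈ P, min (outDeg A x : ℝ) (inDeg A x) +
      ∑ x ∈ N, min (outDeg A x : ℝ) (inDeg A x) +
      ∑ x ∈ X \ X', min (outDeg A x : ℝ) (inDeg A x) := by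
    rw [hb, ← hsplit, Finset.sum_div]
    refine Finset.sum_congr rfl fun x _ => ?_
    rw [deg, Nat.cast_add, outDeg_add_inDeg]
    ring
  have hsN : ∑ x ∈ N, (sVal A x : ℝ) = ∑ j ∈ I, (sVal A (v j) : ℝ) :=
    Finset.sum_image hinjI
  have hsX' : ∑ x ∈ X', (sVal A x : ℝ) = (∑ j ∈ Finset.Icc 1 (k - 1), (sVal A (v j) : ℝ)) +
      (sVal A (v (2 * k)) : ℝ) + (sVal A (v (2 * k + 1)) : ℝ) +
      ∑ j ∈ Finset.Icc k (2 * k - 1), (sVal A (v j) : ℝ) := by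
    obtain ⟨l, rfl⟩ := Nat.exists_eq_add_of_le' hk
    rw [hv, Finset.sum_image hinj, Finset.sum_Icc_succ_top (by omega)]
    rw [show 2 * (l + 1) = (2 * l + 1) + 1 by ring, Finset.sum_Icc_succ_top (by omega)]
    have h : ∑ j ∈ Finset.Icc 1 (2 * l + 1), (sVal A (v j) : ℝ) =
        ∑ j ∈ Finset.Icc 1 l, (sVal A (v j) : ℝ) +
        ∑ j ∈ Finset.Icc (l + 1) (2 * l + 1), (sVal A (v j) : ℝ) := by
      rw [← Finset.sum_union]
      · congr 1
        ext j
        simp only [Finset.mem_union, Finset.mem_Icc]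
        omega
      · rw [Finset.disjoint_left]
        intro j hj hj'
        rw [Finset.mem_Icc] at hj hj'
        omega
    rw [h]
    simp only [Nat.add_sub_cancel]
    ring
  have hp0 : (0 : ℝ) ≤ ((d : ℝ) - 1) / (2 * d) := div_nonneg (by linarith) (by linarith)
  have hp : ((d : ℝ) - 1) / (2 * d) ≤ 1 - ((d : ℝ) - 1) / (2 * d) := by
    have : ((d : ℝ) - 1) / (2 * d) ≤ 1 / 2 := by
      rw [div_le_div_iff₀ (by linarith) (by norm_num)]
      linarith
    linarith
  rw [hbB]
  refine balanced_lt_of_not_cut (m := m) hd'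
    (SP := ∑ x ∈ P, (sVal A x : ℝ)) (SN := ∑ x ∈ N, (sVal A x : ℝ))
    (Finset.sum_nonneg fun x _ => hmin x) (Finset.sum_nonneg fun x _ => hmin x)
    (Nat.cast_nonneg _) ?_ ?_ ?_ (hsN ▸ hIsum) (by rw [← hX's, hsX']) ?_
  · simp_rw [hmX, outDeg_add_inDeg]
    rw [hsplit, Finset.sum_add_distrib, Finset.sum_add_distrib, Finset.sum_add_distrib,
      ← Finset.mul_sum, ← Finset.mul_sum, ← Finset.mul_sum, hgR]
    ring
  · refine hθm.trans_le (mul_le_mul_of_nonneg_left ?_ hd1.le)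
    linarith
  · rw [← hmax_eq]
    calc ∑ x ∈ P, max (outDeg A x : ℝ) (inDeg A x) ≤ P.card • (n : ℝ) :=
          Finset.sum_le_card_nsmul _ _ _ fun x _ => hmax x
      _ = ((k : ℝ) + 1) * n := by
          rw [hPc, nsmul_eq_mul]
          push_cast
          rfl
  · rw [← hmax_eq, ← hmax_eq]
    intro hL₁
    rcases hIac with hside | hside
    · have hNside : ∀ x ∈ N, (outDeg A x : ℝ) ≤ inDeg A x := fun x hx => by
        obtain ⟨j, hj, rfl⟩ := Finset.mem_image.1 hx
        exact hside j hj
      obtain ⟨h1, h2⟩ := sum_le_sum_of_side (o := fun x => (outDeg A x : ℝ))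
        (i := fun x => (inDeg A x : ℝ)) (fun x => Nat.cast_nonneg _)
        (fun x => Nat.cast_nonneg _) hXe hPN hPS hNside hp0 hp
      have := hno _ (Finset.filter_subset (fun x => x ∉ P ∨ (inDeg A x : ℝ) ≤ outDeg A x) X)
        _ hp0 (by linarith) (by linarith)
      linarith
    · have hNside : ∀ x ∈ N, (inDeg A x : ℝ) ≤ outDeg A x := fun x hx => by
        obtain ⟨j, hj, rfl⟩ := Finset.mem_image.1 hx
        exact hside j hj
      obtain ⟨h1, h2⟩ := sum_le_sum_of_side (o := fun x => (inDeg A x : ℝ))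
        (i := fun x => (outDeg A x : ℝ)) (fun x => Nat.cast_nonneg _)
        (fun x => Nat.cast_nonneg _) hXe hPN hPS hNside hp0 hp
      simp_rw [max_comm (inDeg A _ : ℝ), min_comm (inDeg A _ : ℝ)] at h1 h2
      by_contra! hL₂
      have := hno _ (Finset.filter_subset (fun x => x ∉ P ∨ (outDeg A x : ℝ) ≤ inDeg A x) X)
        _ hp0 (by linarith) (by linarith)
      linarith
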